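/- Let u be a continuously differentiable function on a neighborhood of the closure of I, and define v by v(x) = u'(x) if x ∉ M or x is an atom of μ, and v(x) = 0 otherwise. Then there exists a sequence (u_n) of continuously differentiable functions such that u_n → u in L²(μ) and u_n' → v in L²(μ); in particular v is a μ-gradient of u which vanishes μ-a.e. on M minus the atoms of μ. -/

import Mathlib

open MeasureTheory Filter Set
open scoped ENNReal Classical

/-! Let `ρ` be the density of the absolutely continuous part of `μ`, and let `J` be an interval on
which `1 / ρ` is not integrable. A suitable multiple `φ` of a truncation of `1 / ρ` to `J`, off the
support of the singular part of `μ`, has Lebesgue integral `1` and arbitrarily small `L²(μ)` norm: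
if `∫ ψ = T` and `ψ ≤ 1 / ρ`, then `∫ (ψ / T) ^ 2 ρ ≤ 1 / T`. Hence a bounded function on `J` can be
corrected, at no cost in `L²(μ)`, to have mean zero, so that its primitive is supported in `J` and
is small when `J` is short. Cutting the line into short intervals shows that every bounded `h`
supported on the points near which `1 / ρ` is not integrable is an `L²(μ)`-limit of functions with
uniformly small primitives, i.e. that `h` is a gradient of `0`; by density, so is every such `h` in
`L²(μ)`. The theorem follows by taking `h = v - u'` and adding `u`, and the atoms play no role. -/

open scoped NNReal Topology

section NonintegrableSet

variable {α : Type*} [TopologicalSpace α] [MeasurableSpace α]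
  {g g' : α → ℝ≥0∞} {ν ν' : Measure α}

/-- The set of points near which `g` fails to be `ν`-integrable. The set `M` of the paper is the
case `g = 1 / f`, with `ν` the Lebesgue measure on `I`. -/
def nonintegrableSet (g : α → ℝ≥0∞) (ν : Measure α) : Set α :=
  {x | ∀ s ∈ 𝓝 x, ∫⁻ t in s, g t ∂ν = ⊤}

theorem isClosed_nonintegrableSet (g : α → ℝ≥0∞) (ν : Measure α) :
    IsClosed (nonintegrableSet g ν) := by
  refine isOpen_compl_iff.1 (isOpen_iff_mem_nhds.2 fun x hx => ?_)
  obtain ⟨s, hsx, hs⟩ : ∃ s ∈ 𝓝 x, ∫⁻ t in s, g t ∂ν ≠ ⊤ := by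
    simpa [nonintegrableSet] using hx
  filter_upwards [eventually_mem_nhds_iff.2 hsx] with y hsy hy using hs (hy s hsy)

theorem nonintegrableSet_mono_measure (h : ν ≤ ν') :
    nonintegrableSet g ν ⊆ nonintegrableSet g ν' :=
  fun _ hx s hs => top_unique <|
    (hx s hs).symm.trans_le (lintegral_mono' (Measure.restrict_mono subset_rfl h) le_rfl)

theorem nonintegrableSet_congr_ae (h : g =ᵐ[ν] g') :
    nonintegrableSet g ν = nonintegrableSet g' ν := by
  simp only [nonintegrableSet, lintegral_congr_ae (ae_restrict_of_ae h)]

theorem nonintegrableSet_inv_subset_of_eq_withDensity_add {μ μs : Measure α}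
    [SigmaFinite ν] {ρ : α → ℝ≥0∞} (hρ : Measurable ρ)
    (hsing : μs ⟂ₘ ν) (hdecomp : μ = ν.withDensity ρ + μs) (s : Set α) :
    nonintegrableSet ρ⁻¹ (ν.restrict s) ⊆ nonintegrableSet (μ.rnDeriv ν)⁻¹ ν := by
  have hρμ : ρ =ᵐ[ν] μ.rnDeriv ν := Measure.eq_rnDeriv hρ hsing (by rwa [add_comm])
  rw [← nonintegrableSet_congr_ae hρμ.inv]
  exact nonintegrableSet_mono_measure Measure.restrict_le_self

theorem setOf_lintegral_inter_Ioo_eq_top (I : Set ℝ) (g : ℝ → ℝ≥0∞) :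
    {x ∈ closure I | ∀ ε > 0, ∫⁻ t in I ∩ Ioo (x - ε) (x + ε), g t = ⊤} =
      nonintegrableSet g (volume.restrict I) := by
  ext x
  constructor
  · rintro ⟨-, hx⟩ s hs
    obtain ⟨ε, hε, hεs⟩ := (nhds_basis_Ioo_pos x).mem_iff.1 hs
    rw [← top_le_iff, ← hx ε hε, inter_comm, ← Measure.restrict_restrict measurableSet_Ioo]
    exact lintegral_mono_set hεs
  · refine fun hx => ⟨mem_closure_iff_nhds.2 fun s hs => ?_, fun ε hε => ?_⟩
    · obtain ⟨s', hs's, hs', hxs'⟩ := mem_nhds_iff.1 hs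
      by_contra hsI
      have hempty : s' ∩ I = ∅ := by
        rw [not_nonempty_iff_eq_empty] at hsI
        exact subset_empty_iff.1 (hsI ▸ inter_subset_inter_left I hs's)
      simpa [Measure.restrict_restrict hs'.measurableSet, hempty] using hx s' (hs'.mem_nhds hxs')
    · rw [inter_comm, ← Measure.restrict_restrict measurableSet_Ioo]
      exact hx _ ((nhds_basis_Ioo_pos x).mem_of_mem hε)

end NonintegrableSet

section MeanZero

variable {α E : Type*} [MeasurableSpace α] {μ ν : Measure α} {s : Set α} [NormedAddCommGroup E]

theorem exists_lt_lintegral_min_natCast {g : α → ℝ≥0∞} (hg : Measurable g) {r : ℝ≥0∞}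
    (hr : r < ∫⁻ x, g x ∂ν) : ∃ n : ℕ, r < ∫⁻ x, min (g x) n ∂ν := by
  have hsup : ∫⁻ x, g x ∂ν = ⨆ n : ℕ, ∫⁻ x, min (g x) n ∂ν := by
    rw [← lintegral_iSup (fun n => hg.min measurable_const)
      (fun m n hmn x => min_le_min_left _ (Nat.cast_le.2 hmn))]
    simp [← inf_iSup_eq, ENNReal.iSup_natCast]
  exact lt_iSup_iff.1 (hsup ▸ hr)

theorem integrable_of_memLp_of_support_subset {p : ℝ≥0∞} (hp : 1 ≤ p) {w : α → E}
    (hw : MemLp w p ν) (hws : w.support ⊆ s) (hs : ν s ≠ ⊤) : Integrable w ν := by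
  have : Fact (ν s < ⊤) := ⟨hs.lt_top⟩
  exact (integrableOn_iff_integrable_of_support_subset hws).1 (hw.restrict s |>.integrable hp)

/-- On the absolutely continuous part of `μ`, whose density is `ρ`, the bound `ψ ≤ ρ⁻¹` gives
`ρ * ψ ^ 2 ≤ ψ`. -/
theorem lintegral_sq_le_lintegral_of_le_rnDeriv_inv [μ.HaveLebesgueDecomposition ν]
    {ψ : α → ℝ≥0∞} (hψm : Measurable ψ) (hψ : ∀ x, ψ x ≤ (μ.rnDeriv ν x)⁻¹)
    (hψs : ψ =ᵐ[μ.singularPart ν] 0) : ∫⁻ x, ψ x ^ 2 ∂μ ≤ ∫⁻ x, ψ x ∂ν := by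
  have hsing : ∫⁻ x, ψ x ^ 2 ∂μ.singularPart ν = 0 := by
    rw [lintegral_eq_zero_iff (hψm.pow_const 2)]
    filter_upwards [hψs] with x hx
    simp [hx]
  calc ∫⁻ x, ψ x ^ 2 ∂μ
      = ∫⁻ x, μ.rnDeriv ν x * ψ x ^ 2 ∂ν := by
        conv_lhs => rw [μ.haveLebesgueDecomposition_add ν, lintegral_add_measure, hsing, zero_add]
        exact lintegral_withDensity_eq_lintegral_mul _ (μ.measurable_rnDeriv ν) (hψm.pow_const 2)
    _ ≤ ∫⁻ x, ψ x ∂ν := lintegral_mono fun x => by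
        calc μ.rnDeriv ν x * ψ x ^ 2 = μ.rnDeriv ν x * ψ x * ψ x := by ring
          _ ≤ 1 * ψ x := by
            gcongr
            exact (mul_le_mul_right (hψ x) _).trans (ENNReal.mul_inv_le_one _)
          _ = ψ x := one_mul _

theorem exists_indicator_lintegral_sq_le [μ.HaveLebesgueDecomposition ν] (hs : MeasurableSet s)
    (hinf : ∫⁻ x in s, (μ.rnDeriv ν x)⁻¹ ∂ν = ⊤) {r : ℝ≥0∞} (hr : r < ⊤) :
    ∃ ψ : α → ℝ≥0∞, ∃ n : ℕ, Measurable ψ ∧ ψ.support ⊆ s ∧ (∀ x, ψ x ≤ n) ∧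
      r < ∫⁻ x, ψ x ∂ν ∧ ∫⁻ x, ψ x ^ 2 ∂μ ≤ ∫⁻ x, ψ x ∂ν := by
  obtain ⟨N, hN, hμN, hνN⟩ := μ.mutuallySingular_singularPart ν
  have hρ : Measurable fun x => (μ.rnDeriv ν x)⁻¹ := (μ.measurable_rnDeriv ν).inv
  obtain ⟨n, hn⟩ := exists_lt_lintegral_min_natCast hρ (hr.trans_eq hinf.symm)
  set m : α → ℝ≥0∞ := fun x => min (μ.rnDeriv ν x)⁻¹ n
  have hψm : Measurable ((s ∩ N).indicator m) := (hρ.min measurable_const).indicator (hs.inter hN)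
  refine ⟨(s ∩ N).indicator m, n, hψm, support_indicator_subset.trans inter_subset_left,
    fun x => (indicator_le_self _ _ x).trans (min_le_right _ _), ?_,
    lintegral_sq_le_lintegral_of_le_rnDeriv_inv hψm
      (fun x => (indicator_le_self _ _ x).trans (min_le_left _ _)) ?_⟩
  · have hsN : (s ∩ N : Set α) =ᵐ[ν] s := inter_ae_eq_left_of_ae_eq_univ (ae_eq_univ.2 hνN)
    rwa [lintegral_indicator (hs.inter hN), setLIntegral_congr hsN]
  · filter_upwards [measure_eq_zero_iff_ae_notMem.1 hμN] with x hx
    exact indicator_of_notMem (fun h => hx h.2) _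

theorem memLp_of_bound_of_support_subset {w : α → E} (hw : AEStronglyMeasurable w ν)
    (hws : w.support ⊆ s) (hs : ν s ≠ ⊤) {C : ℝ} (hC : ∀ x, ‖w x‖ ≤ C) (p : ℝ≥0∞) :
    MemLp w p ν := by
  have : Fact (ν s < ⊤) := ⟨hs.lt_top⟩
  refine ⟨hw, ?_⟩
  rw [← eLpNorm_restrict_eq_of_support_subset hws]
  exact (MemLp.of_bound hw.restrict C (.of_forall hC)).eLpNorm_lt_top

theorem eLpNorm_two_sq_eq_lintegral_enorm_sq (w : α → E) :
    eLpNorm w 2 μ ^ 2 = ∫⁻ x, ‖w x‖ₑ ^ 2 ∂μ := by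
  simpa using eLpNorm_nnreal_pow_eq_lintegral (f := w) (μ := μ) (two_ne_zero (α := ℝ≥0))

theorem exists_integral_eq_one_eLpNorm_le [μ.HaveLebesgueDecomposition ν] (hs : MeasurableSet s)
    (hμs : μ s ≠ ⊤) (hνs : ν s ≠ ⊤) (hinf : ∫⁻ x in s, (μ.rnDeriv ν x)⁻¹ ∂ν = ⊤)
    {η : ℝ≥0∞} (hη : η ≠ 0) :
    ∃ φ : α → ℝ, MemLp φ 2 (μ + ν) ∧ φ.support ⊆ s ∧ 0 ≤ φ ∧ ∫ x, φ x ∂ν = 1 ∧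
      eLpNorm φ 2 μ ≤ η := by
  obtain ⟨ψ, n, hψm, hψs, hψn, hr, hψμ⟩ := exists_indicator_lintegral_sq_le hs hinf
    (r := η⁻¹ ^ 2) (by simpa [lt_top_iff_ne_top] using hη)
  set T := ∫⁻ x, ψ x ∂ν
  have hψtop : ∀ x, ψ x ≠ ⊤ := fun x => ((hψn x).trans_lt (ENNReal.natCast_lt_top n)).ne
  set f : α → ℝ := fun x => (ψ x).toReal
  have hfs : f.support ⊆ s := (Function.support_comp_subset ENNReal.toReal_zero ψ).trans hψs
  have hfm : Measurable f := hψm.ennreal_toReal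
  have hfn : ∀ x, |f x| ≤ n := fun x => by
    simpa [f] using ENNReal.toReal_mono (ENNReal.natCast_ne_top n) (hψn x)
  have hfL : MemLp f 2 (μ + ν) := memLp_of_bound_of_support_subset hfm.aestronglyMeasurable hfs
    (ENNReal.add_ne_top.2 ⟨hμs, hνs⟩) hfn 2
  have hfe : ∀ x, ‖f x‖ₑ = ψ x := fun x => Real.enorm_toReal (hψtop x)
  have hT0 : T ≠ 0 := hr.ne_bot
  have hTtop : T ≠ ⊤ := by
    have := (integrable_of_memLp_of_support_subset one_le_two hfL.right_of_add_measure hfs hνs).2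
    simpa only [HasFiniteIntegral, hfe, lt_top_iff_ne_top] using this
  have hfT : ∫ x, f x ∂ν = T.toReal :=
    integral_toReal hψm.aemeasurable (.of_forall fun x => (hψtop x).lt_top)
  refine ⟨T.toReal⁻¹ • f, hfL.const_smul _, (Function.support_const_smul_subset _ f).trans hfs,
    fun x => mul_nonneg (by positivity) ENNReal.toReal_nonneg, ?_, ?_⟩
  · simp only [Pi.smul_apply, smul_eq_mul]
    rw [integral_const_mul, hfT]
    exact inv_mul_cancel₀ (ENNReal.toReal_ne_zero.2 ⟨hT0, hTtop⟩)
  · refine (ENNReal.pow_le_pow_left_iff two_ne_zero).1 ?_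
    calc eLpNorm (T.toReal⁻¹ • f) 2 μ ^ 2
        = T⁻¹ ^ 2 * ∫⁻ x, ψ x ^ 2 ∂μ := by
          rw [eLpNorm_const_smul, mul_pow, eLpNorm_two_sq_eq_lintegral_enorm_sq,
            ← ENNReal.toReal_inv, Real.enorm_toReal (ENNReal.inv_ne_top.2 hT0)]
          simp only [hfe]
      _ ≤ T⁻¹ ^ 2 * T := by gcongr
      _ = T⁻¹ := by rw [sq, mul_assoc, ENNReal.inv_mul_cancel hT0 hTtop, mul_one]
      _ ≤ η ^ 2 := by
        rw [ENNReal.inv_le_iff_inv_le, ENNReal.inv_pow]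
        exact hr.le

/-- Subtracting `(∫ x in s, h x ∂ν) • φ`, where `φ` has `ν`-integral `1` but is small in `L²(μ)`,
makes the integral vanish. -/
theorem exists_integral_eq_zero_eLpNorm_sub_le [μ.HaveLebesgueDecomposition ν]
    (hs : MeasurableSet s) (hμs : μ s ≠ ⊤) (hνs : ν s ≠ ⊤) {h : α → ℝ}
    (hh : MemLp h 2 ((μ + ν).restrict s))
    (hinf : ∫ x in s, h x ∂ν ≠ 0 → ∫⁻ x in s, (μ.rnDeriv ν x)⁻¹ ∂ν = ⊤)
    {η : ℝ≥0} (hη : 0 < η) :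
    ∃ w : α → ℝ, MemLp w 2 (μ + ν) ∧ w.support ⊆ s ∧ ∫ x, w x ∂ν = 0 ∧
      ∫ x, |w x| ∂ν ≤ 2 * ∫ x in s, |h x| ∂ν ∧ eLpNorm (w - s.indicator h) 2 μ ≤ η := by
  set H := ∫ x in s, h x ∂ν
  have hkL : MemLp (s.indicator h) 2 (μ + ν) := (memLp_indicator_iff_restrict hs).2 hh
  have hks : (s.indicator h).support ⊆ s := support_indicator_subset
  have hki : Integrable (s.indicator h) ν :=
    integrable_of_memLp_of_support_subset one_le_two hkL.right_of_add_measure hks hνs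
  have hkH : ∫ x, s.indicator h x ∂ν = H := integral_indicator hs
  have hkabs : ∫ x, |s.indicator h x| ∂ν = ∫ x in s, |h x| ∂ν := by
    simp only [← Real.norm_eq_abs, norm_indicator_eq_indicator_norm, integral_indicator hs]
  rcases eq_or_ne H 0 with hH | hH
  · refine ⟨s.indicator h, hkL, hks, hkH.trans hH, ?_, by simp⟩
    rw [hkabs]
    linarith [integral_nonneg (μ := ν.restrict s) (f := fun x => |h x|) fun x => abs_nonneg _]
  have hH' : ‖H‖ₑ ≠ 0 := enorm_ne_zero.2 hH
  obtain ⟨φ, hφL, hφs, hφ0, hφ1, hφη⟩ := exists_integral_eq_one_eLpNorm_le hs hμs hνs (hinf hH)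
    (η := η / ‖H‖ₑ) (by simp [hη.ne'])
  have hφi : Integrable φ ν := integrable_of_integral_eq_one hφ1
  refine ⟨s.indicator h - H • φ, hkL.sub (hφL.const_smul H), ?_, ?_, ?_, ?_⟩
  · exact (Function.support_sub _ _).trans
      (union_subset hks ((Function.support_const_smul_subset H φ).trans hφs))
  · rw [integral_sub' hki (hφi.smul H)]
    simp only [Pi.smul_apply, smul_eq_mul]
    rw [integral_const_mul, hφ1, hkH, mul_one, sub_self]
  · calc ∫ x, |(s.indicator h - H • φ) x| ∂ν
        ≤ ∫ x, (|s.indicator h x| + |H| * φ x) ∂ν := by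
          refine integral_mono (hki.sub (hφi.smul H)).abs (hki.abs.add (hφi.const_mul |H|))
            fun x => (abs_sub _ _).trans_eq ?_
          rw [Pi.smul_apply, smul_eq_mul, abs_mul, abs_of_nonneg (hφ0 x)]
      _ = ∫ x in s, |h x| ∂ν + |H| := by
          rw [integral_add hki.abs (hφi.const_mul |H|), integral_const_mul, hφ1, hkabs, mul_one]
      _ ≤ 2 * ∫ x in s, |h x| ∂ν := by
          linarith [abs_integral_le_integral_abs (f := h) (μ := ν.restrict s)]
  · calc eLpNorm (s.indicator h - H • φ - s.indicator h) 2 μ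
        = ‖H‖ₑ * eLpNorm φ 2 μ := by
          rw [sub_sub_cancel_left, eLpNorm_neg, eLpNorm_const_smul]
      _ ≤ ‖H‖ₑ * (η / ‖H‖ₑ) := by gcongr
      _ = η := ENNReal.mul_div_cancel hH' enorm_ne_top

end MeanZero

theorem exists_continuous_eLpNorm_sub_le_of_support_subset_isCompact {α E : Type*}
    [TopologicalSpace α] [NormalSpace α] [R1Space α] [WeaklyLocallyCompactSpace α]
    [MeasurableSpace α] [BorelSpace α] [NormedAddCommGroup E] [NormedSpace ℝ E] {μ : Measure α}
    [μ.Regular] {p : ℝ≥0∞} (hp1 : 1 ≤ p) (hp : p ≠ ⊤) {K : Set α} (hK : IsCompact K) {w : α → E}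
    (hw : MemLp w p μ) (hwK : w.support ⊆ K) :
    ∃ C : ℝ≥0∞, C ≠ ⊤ ∧ ∀ ε : ℝ≥0∞, ε ≠ 0 → ∃ g : α → E, Continuous g ∧ HasCompactSupport g ∧
      eLpNorm (w - g) p μ ≤ ε ∧ eLpNorm (w - g) 1 μ ≤ C * ε := by
  obtain ⟨χ, hχK, -, hχc, hχ⟩ :=
    exists_continuous_one_zero_of_isCompact hK isClosed_empty (disjoint_empty K)
  have hr : 0 ≤ 1 / (1 : ℝ≥0∞).toReal - 1 / p.toReal := by
    have : 1 ≤ p.toReal := by simpa using ENNReal.toReal_mono hp hp1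
    simpa using inv_le_one_of_one_le₀ this
  refine ⟨μ (tsupport χ) ^ _,
    ENNReal.rpow_ne_top_of_nonneg hr hχc.isCompact.measure_lt_top.ne, fun ε hε => ?_⟩
  obtain ⟨f, -, hfε, hf, hfL⟩ := hw.exists_hasCompactSupport_eLpNorm_sub_le hp hε
  set g : α → E := fun x => χ x • f x
  have hg : Continuous g := χ.continuous.smul hf
  have hsub (x : α) : (w - g) x = χ x • (w - f) x := by
    have hχw : χ x • w x = w x := by
      by_cases hx : x ∈ K
      · simp [hχK hx]
      · simp [Function.notMem_support.1 fun h => hx (hwK h)]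
    simp only [Pi.sub_apply, g, smul_sub, hχw]
  have hLp : eLpNorm (w - g) p μ ≤ ε := by
    refine (eLpNorm_mono fun x => ?_).trans hfε
    rw [hsub, norm_smul, Real.norm_of_nonneg (hχ x).1]
    exact mul_le_of_le_one_left (norm_nonneg _) (hχ x).2
  have hsupp : (w - g).support ⊆ tsupport χ := by
    rw [funext hsub]
    exact (Function.support_smul_subset_left _ _).trans (subset_tsupport χ)
  have hgm : AEStronglyMeasurable g μ := χ.continuous.aestronglyMeasurable.smul hfL.1
  refine ⟨g, hg, hχc.smul_right, hLp, ?_⟩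
  calc eLpNorm (w - g) 1 μ
      = eLpNorm (w - g) 1 (μ.restrict (tsupport χ)) :=
        (eLpNorm_restrict_eq_of_support_subset hsupp).symm
    _ ≤ eLpNorm (w - g) p (μ.restrict (tsupport χ)) *
          μ.restrict (tsupport χ) univ ^ (1 / (1 : ℝ≥0∞).toReal - 1 / p.toReal) :=
        eLpNorm_le_eLpNorm_mul_rpow_measure_univ hp1 (hw.1.sub hgm).restrict
    _ ≤ μ (tsupport χ) ^ (1 / (1 : ℝ≥0∞).toReal - 1 / p.toReal) * ε := by
        rw [Measure.restrict_apply_univ, mul_comm, eLpNorm_restrict_eq_of_support_subset hsupp]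
        gcongr

section Primitive

variable {E : Type*} [NormedAddCommGroup E] [NormedSpace ℝ E] {g w : ℝ → E} {c x : ℝ}

theorem integral_Iic_eq_add_intervalIntegral (hw : Integrable w) (x : ℝ) :
    ∫ t in Iic x, w t = (∫ t in Iic 0, w t) + ∫ t in (0)..x, w t := by
  rw [← intervalIntegral.integral_Iic_sub_Iic hw.integrableOn hw.integrableOn,
    add_sub_cancel]

theorem continuous_integral_Iic (hw : Integrable w) :
    Continuous fun x => ∫ t in Iic x, w t := by
  rw [funext (integral_Iic_eq_add_intervalIntegral hw)]
  exact continuous_const.add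
    (intervalIntegral.continuous_primitive (fun _ _ => hw.intervalIntegrable) 0)

theorem hasDerivAt_integral_Iic [CompleteSpace E] (hg : Continuous g) (hgi : Integrable g) (x : ℝ) :
    HasDerivAt (fun x => ∫ t in Iic x, g t) (g x) x := by
  rw [funext (integral_Iic_eq_add_intervalIntegral hgi)]
  exact (intervalIntegral.integral_hasDerivAt_right hgi.intervalIntegrable
    (hg.stronglyMeasurableAtFilter _ _) hg.continuousAt).const_add _

theorem enorm_integral_Iic_sub_le (hg : Integrable g) (hw : Integrable w) (x : ℝ) :
    ‖(∫ t in Iic x, g t) - ∫ t in Iic x, w t‖ₑ ≤ eLpNorm (w - g) 1 volume := by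
  rw [← integral_sub hg.integrableOn hw.integrableOn, eLpNorm_sub_comm,
    eLpNorm_one_eq_lintegral_enorm]
  exact (enorm_integral_le_lintegral_enorm _).trans (setLIntegral_le_lintegral _ _)

theorem integral_Iic_eq_zero_of_support_subset (hw : w.support ⊆ Ioi c) (hx : x ≤ c) :
    ∫ t in Iic x, w t = 0 :=
  setIntegral_eq_zero_of_forall_eq_zero fun _ ht => Function.notMem_support.1 fun h =>
    (hw h).not_ge ((mem_Iic.1 ht).trans hx)

theorem integral_Iic_eq_integral_of_support_subset (hw : w.support ⊆ Iic c) (hx : c ≤ x) :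
    ∫ t in Iic x, w t = ∫ t, w t :=
  setIntegral_eq_integral_of_forall_compl_eq_zero fun _ ht => Function.notMem_support.1 fun h =>
    ht ((mem_Iic.1 (hw h)).trans hx)

end Primitive

section Gradient

variable {p : ℝ≥0∞} {μ : Measure ℝ} {u v : ℝ → ℝ}

/-- `v` is a gradient of `u` for the `L^p(μ)` norm, i.e. `(u, v)` lies in the
`L^p(μ)`-closure of the pairs `(U, U')` with `U` of class `C¹`; the paper's `μ`-gradients are the
case `p = 2`. -/
def IsLpGradient (p : ℝ≥0∞) (μ : Measure ℝ) (u v : ℝ → ℝ) : Prop :=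
  ∃ U : ℕ → ℝ → ℝ, (∀ n, ContDiff ℝ 1 (U n)) ∧
    Tendsto (fun n => eLpNorm (U n - u) p μ) atTop (𝓝 0) ∧
    Tendsto (fun n => eLpNorm (deriv (U n) - v) p μ) atTop (𝓝 0)

theorem isLpGradient_iff_forall_exists :
    IsLpGradient p μ u v ↔ ∀ ε : ℝ≥0∞, ε ≠ 0 → ∃ U : ℝ → ℝ, ContDiff ℝ 1 U ∧
      eLpNorm (U - u) p μ + eLpNorm (deriv U - v) p μ ≤ ε := by
  constructor
  · rintro ⟨U, hU, hUu, hUv⟩ ε hε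
    have hadd := hUu.add hUv
    rw [add_zero] at hadd
    obtain ⟨n, hn⟩ := (ENNReal.tendsto_nhds_zero.1 hadd ε (pos_iff_ne_zero.2 hε)).exists
    exact ⟨U n, hU n, hn⟩
  · intro H
    choose U hU hUuv using fun n : ℕ => H (n : ℝ≥0∞)⁻¹ (by simp)
    refine ⟨U, hU, ?_, ?_⟩
    · exact tendsto_of_tendsto_of_tendsto_of_le_of_le tendsto_const_nhds
        ENNReal.tendsto_inv_nat_nhds_zero (fun _ => zero_le) fun n => le_self_add.trans (hUuv n)
    · exact tendsto_of_tendsto_of_tendsto_of_le_of_le tendsto_const_nhds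
        ENNReal.tendsto_inv_nat_nhds_zero (fun _ => zero_le) fun n => le_add_self.trans (hUuv n)

theorem isLpGradient_deriv (hu : ContDiff ℝ 1 u) : IsLpGradient p μ u (deriv u) :=
  ⟨fun _ => u, fun _ => hu, by simp, by simp⟩

theorem IsLpGradient.add_contDiff (h : IsLpGradient p μ u v) {g : ℝ → ℝ} (hg : ContDiff ℝ 1 g) :
    IsLpGradient p μ (u + g) (v + deriv g) := by
  obtain ⟨U, hU, hUu, hUv⟩ := h
  have hderiv (n : ℕ) : deriv (U n + g) = deriv (U n) + deriv g := funext fun x =>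
    deriv_add ((hU n).differentiable one_ne_zero x) (hg.differentiable one_ne_zero x)
  refine ⟨fun n => U n + g, fun n => (hU n).add hg, ?_, ?_⟩
  · simpa only [add_sub_add_right_eq_sub] using hUu
  · simpa only [hderiv, add_sub_add_right_eq_sub] using hUv

theorem isLpGradient_of_forall_exists (hp : 1 ≤ p) (hu : AEStronglyMeasurable u μ)
    (hv : AEStronglyMeasurable v μ) {K : ℝ≥0∞} (hK : K ≠ ⊤)
    (H : ∀ ε : ℝ≥0, 0 < ε → ∃ u' v' : ℝ → ℝ, AEStronglyMeasurable u' μ ∧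
      AEStronglyMeasurable v' μ ∧ IsLpGradient p μ u' v' ∧
      eLpNorm (u' - u) p μ + eLpNorm (v' - v) p μ ≤ K * ε) :
    IsLpGradient p μ u v := by
  refine isLpGradient_iff_forall_exists.2 fun ε hε => ?_
  have hε2 : ε / 2 ≠ 0 := by simpa using hε
  obtain ⟨δ, hδ, hδε⟩ := ENNReal.exists_nnreal_pos_mul_lt hK hε2
  obtain ⟨u', v', hu', hv', hgrad, huv'⟩ := H δ hδ
  obtain ⟨U, hU, hUuv⟩ := isLpGradient_iff_forall_exists.1 hgrad _ hε2
  refine ⟨U, hU, ?_⟩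
  have hUm := hU.continuous.aestronglyMeasurable (μ := μ)
  have hUm' := (hU.continuous_deriv le_rfl).aestronglyMeasurable (μ := μ)
  calc eLpNorm (U - u) p μ + eLpNorm (deriv U - v) p μ
      = eLpNorm ((U - u') + (u' - u)) p μ + eLpNorm ((deriv U - v') + (v' - v)) p μ := by
        simp only [sub_add_sub_cancel]
    _ ≤ (eLpNorm (U - u') p μ + eLpNorm (u' - u) p μ) +
          (eLpNorm (deriv U - v') p μ + eLpNorm (v' - v) p μ) :=
        add_le_add (eLpNorm_add_le (hUm.sub hu') (hu'.sub hu) hp)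
          (eLpNorm_add_le (hUm'.sub hv') (hv'.sub hv) hp)
    _ = (eLpNorm (U - u') p μ + eLpNorm (deriv U - v') p μ) +
          (eLpNorm (u' - u) p μ + eLpNorm (v' - v) p μ) := by ring
    _ ≤ ε / 2 + ε / 2 := add_le_add hUuv (huv'.trans ((mul_comm K δ).trans_lt hδε).le)
    _ = ε := ENNReal.add_halves ε

theorem isLpGradient_integral_Iic_of_continuous {g : ℝ → ℝ} (hg : Continuous g)
    (hgi : Integrable g) : IsLpGradient p μ (fun x => ∫ t in Iic x, g t) g := by
  have hderiv : deriv (fun x => ∫ t in Iic x, g t) = g :=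
    funext fun x => (hasDerivAt_integral_Iic hg hgi x).deriv
  have hdiff : ContDiff ℝ 1 fun x => ∫ t in Iic x, g t := contDiff_one_iff_deriv.2
    ⟨fun x => (hasDerivAt_integral_Iic hg hgi x).differentiableAt, hderiv.symm ▸ hg⟩
  simpa only [hderiv] using isLpGradient_deriv (p := p) (μ := μ) hdiff

theorem isLpGradient_integral_Iic [IsFiniteMeasure μ] (hp1 : 1 ≤ p) (hp : p ≠ ⊤) {K : Set ℝ}
    (hK : IsCompact K) {w : ℝ → ℝ} (hw : MemLp w p (μ + volume)) (hwK : w.support ⊆ K) :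
    IsLpGradient p μ (fun x => ∫ t in Iic x, w t) w := by
  have hwi : Integrable w := integrable_of_memLp_of_support_subset hp1 hw.right_of_add_measure hwK
    hK.measure_lt_top.ne
  have : IsFiniteMeasureOnCompacts (μ + volume) := ⟨fun K hK => by
    simpa using hK.measure_lt_top⟩
  have := isLocallyFiniteMeasure_of_isFiniteMeasureOnCompacts (μ := μ + volume)
  obtain ⟨C, hC, H⟩ := exists_continuous_eLpNorm_sub_le_of_support_subset_isCompact hp1 hp hK hw hwK
  have hμ : μ univ ^ p.toReal⁻¹ ≠ ⊤ :=
    ENNReal.rpow_ne_top_of_nonneg (by positivity) (measure_ne_top μ univ)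
  refine isLpGradient_of_forall_exists hp1 (continuous_integral_Iic hwi).aestronglyMeasurable
    hw.left_of_add_measure.1 (K := C * μ univ ^ p.toReal⁻¹ + 1) (by finiteness) fun ε hε => ?_
  obtain ⟨g, hg, hgc, hgp, hg1⟩ := H ε (by exact_mod_cast hε.ne')
  have hgi : Integrable g := hg.integrable_of_hasCompactSupport hgc
  refine ⟨fun x => ∫ t in Iic x, g t, g, (continuous_integral_Iic hgi).aestronglyMeasurable,
    hg.aestronglyMeasurable, isLpGradient_integral_Iic_of_continuous hg hgi, ?_⟩
  have hprim (x : ℝ) : ‖(∫ t in Iic x, g t) - ∫ t in Iic x, w t‖ₑ ≤ C * ε :=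
    (enorm_integral_Iic_sub_le hgi hwi x).trans
      ((eLpNorm_mono_measure _ (Measure.le_add_left le_rfl)).trans hg1)
  rw [add_mul, one_mul, mul_right_comm]
  refine add_le_add (eLpNorm_le_of_ae_enorm_bound (.of_forall hprim)) ?_
  rw [eLpNorm_sub_comm]
  exact (eLpNorm_mono_measure _ (Measure.le_add_right le_rfl)).trans hgp

end Gradient

section SmallPrimitive

variable {μ : Measure ℝ} {h : ℝ → ℝ} {δ c d e : ℝ}

/-- On `(c, d]`, the function `h` is an `L²(μ)`-limit of functions supported in `(c, d]` which have
mean zero and primitives bounded by `δ`. Because of the vanishing mean, the primitives vanish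
outside `(c, d]`, so that approximations on adjacent intervals add up without increasing `δ`. -/
def HasSmallPrimitiveApprox (μ : Measure ℝ) (h : ℝ → ℝ) (δ c d : ℝ) : Prop :=
  ∀ η : ℝ≥0, 0 < η → ∃ w : ℝ → ℝ, MemLp w 2 (μ + volume) ∧ w.support ⊆ Ioc c d ∧
    ∫ x, w x = 0 ∧ (∀ x, |∫ t in Iic x, w t| ≤ δ) ∧ eLpNorm (w - (Ioc c d).indicator h) 2 μ ≤ η

theorem integrable_of_memLp_of_support_subset_Ioc {w : ℝ → ℝ} (hw : MemLp w 2 (μ + volume))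
    (hwcd : w.support ⊆ Ioc c d) : Integrable w :=
  integrable_of_memLp_of_support_subset one_le_two hw.right_of_add_measure hwcd
    measure_Ioc_lt_top.ne

theorem HasSmallPrimitiveApprox.trans (h₁ : HasSmallPrimitiveApprox μ h δ c d)
    (h₂ : HasSmallPrimitiveApprox μ h δ d e) (hh : AEStronglyMeasurable h μ) (hcd : c ≤ d)
    (hde : d ≤ e) : HasSmallPrimitiveApprox μ h δ c e := by
  intro η hη
  obtain ⟨w₁, hw₁, hs₁, hi₁, hp₁, ha₁⟩ := h₁ (η / 2) (half_pos hη)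
  obtain ⟨w₂, hw₂, hs₂, hi₂, hp₂, ha₂⟩ := h₂ (η / 2) (half_pos hη)
  have hL₁ := integrable_of_memLp_of_support_subset_Ioc hw₁ hs₁
  have hL₂ := integrable_of_memLp_of_support_subset_Ioc hw₂ hs₂
  have hIoc : Ioc c e = Ioc c d ∪ Ioc d e := (Ioc_union_Ioc_eq_Ioc hcd hde).symm
  refine ⟨w₁ + w₂, hw₁.add hw₂, ?_, ?_, fun x => ?_, ?_⟩
  · exact hIoc ▸ (Function.support_add _ _).trans (union_subset_union hs₁ hs₂)
  · rw [integral_add' hL₁ hL₂, hi₁, hi₂, add_zero]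
  · rw [integral_add' hL₁.integrableOn hL₂.integrableOn]
    rcases le_total x d with hx | hx
    · rw [integral_Iic_eq_zero_of_support_subset (hs₂.trans Ioc_subset_Ioi_self) hx, add_zero]
      exact hp₁ x
    · rw [integral_Iic_eq_integral_of_support_subset (hs₁.trans Ioc_subset_Iic_self) hx, hi₁,
        zero_add]
      exact hp₂ x
  · have hind : (Ioc c e).indicator h = (Ioc c d).indicator h + (Ioc d e).indicator h := by
      rw [hIoc, indicator_union_of_disjoint (Ioc_disjoint_Ioc_of_le le_rfl)]
      rfl
    calc eLpNorm (w₁ + w₂ - (Ioc c e).indicator h) 2 μ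
        = eLpNorm ((w₁ - (Ioc c d).indicator h) + (w₂ - (Ioc d e).indicator h)) 2 μ := by
          rw [hind, add_sub_add_comm]
      _ ≤ eLpNorm (w₁ - (Ioc c d).indicator h) 2 μ + eLpNorm (w₂ - (Ioc d e).indicator h) 2 μ :=
          eLpNorm_add_le (hw₁.left_of_add_measure.1.sub (hh.indicator measurableSet_Ioc))
            (hw₂.left_of_add_measure.1.sub (hh.indicator measurableSet_Ioc)) one_le_two
      _ ≤ ↑(η / 2) + ↑(η / 2) := add_le_add ha₁ ha₂
      _ = η := by rw [← ENNReal.coe_add, add_halves]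

theorem hasSmallPrimitiveApprox_of_mul_le [IsLocallyFiniteMeasure μ] {C : ℝ} (hh : Measurable h)
    (hC : ∀ x, |h x| ≤ C)
    (hM : h.support ⊆ nonintegrableSet (μ.rnDeriv volume)⁻¹ volume)
    (hcd : c ≤ d) (hδ : 2 * (C * (d - c)) ≤ δ) : HasSmallPrimitiveApprox μ h δ c d := by
  intro η hη
  have hinf (hne : ∫ x in Ioc c d, h x ≠ 0) :
      ∫⁻ x in Ioc c d, (μ.rnDeriv volume x)⁻¹ = ⊤ := by
    rw [integral_Ioc_eq_integral_Ioo] at hne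
    obtain ⟨x, hx, hhx⟩ : ∃ x ∈ Ioo c d, h x ≠ 0 := by
      contrapose! hne
      exact setIntegral_eq_zero_of_forall_eq_zero hne
    exact hM hhx _ (Ioc_mem_nhds hx.1 hx.2)
  have hL : MemLp h 2 ((μ + volume).restrict (Ioc c d)) := by
    have : Fact ((μ + volume : Measure ℝ) (Ioc c d) < ⊤) :=
      ⟨ENNReal.add_lt_top.2 ⟨measure_Ioc_lt_top, measure_Ioc_lt_top⟩⟩
    exact .of_bound hh.aestronglyMeasurable C (.of_forall hC)
  obtain ⟨w, hw, hws, hwi, hwabs, hwη⟩ := exists_integral_eq_zero_eLpNorm_sub_le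
    measurableSet_Ioc measure_Ioc_lt_top.ne measure_Ioc_lt_top.ne hL hinf hη
  refine ⟨w, hw, hws, hwi, fun x => ?_, hwη⟩
  have hwL := integrable_of_memLp_of_support_subset_Ioc hw hws
  calc |∫ t in Iic x, w t|
      ≤ ∫ t in Iic x, |w t| := abs_integral_le_integral_abs
    _ ≤ ∫ t, |w t| := setIntegral_le_integral hwL.abs (.of_forall fun t => abs_nonneg _)
    _ ≤ 2 * ∫ t in Ioc c d, |h t| := hwabs
    _ ≤ 2 * (C * (d - c)) := by
        have hle : ∫ t in Ioc c d, |h t| ≤ ∫ _ in Ioc c d, C :=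
          integral_mono_of_nonneg (.of_forall fun t => abs_nonneg _) (integrable_const C)
            (.of_forall hC)
        rw [setIntegral_const, smul_eq_mul, Real.volume_real_Ioc_of_le hcd, mul_comm] at hle
        gcongr
    _ ≤ δ := hδ

theorem hasSmallPrimitiveApprox [IsLocallyFiniteMeasure μ] {C : ℝ} (hh : Measurable h)
    (hC : ∀ x, |h x| ≤ C)
    (hM : h.support ⊆ nonintegrableSet (μ.rnDeriv volume)⁻¹ volume)
    (hδ : 0 < δ) (hcd : c ≤ d) : HasSmallPrimitiveApprox μ h δ c d := by
  have hC0 : 0 ≤ C := (abs_nonneg _).trans (hC 0)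
  set r := δ / (2 * (C + 1))
  have hr : 0 < r := by positivity
  have hCr : 2 * (C * r) ≤ δ := by
    calc 2 * (C * r) ≤ 2 * ((C + 1) * r) := by gcongr; linarith
      _ = δ := by simp only [r]; field_simp
  have hind (n : ℕ) : ∀ d, c ≤ d → d - c ≤ n * r → HasSmallPrimitiveApprox μ h δ c d := by
    induction n with
    | zero =>
      intro d hcd hn
      have hdc : d - c = 0 := le_antisymm (by simpa using hn) (sub_nonneg.2 hcd)
      exact hasSmallPrimitiveApprox_of_mul_le hh hC hM hcd (by simpa [hdc] using hδ.le)
    | succ n ih =>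
      intro d hcd hn
      push_cast at hn
      have hle : max c (d - r) ≤ d := max_le hcd (by linarith)
      have hlast : d - max c (d - r) ≤ r := by linarith [le_max_right c (d - r)]
      refine (ih (max c (d - r)) (le_max_left _ _) ?_).trans
        (hasSmallPrimitiveApprox_of_mul_le hh hC hM hle ?_) hh.aestronglyMeasurable
        (le_max_left _ _) hle
      · rw [sub_le_iff_le_add]
        exact max_le (le_add_of_nonneg_left (by positivity)) (by linarith)
      · exact hCr.trans' (by gcongr)
  obtain ⟨n, hn⟩ := Archimedean.arch (d - c) hr
  exact hind n d hcd (by simpa using hn)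

end SmallPrimitive

section Truncation

variable {μ : Measure ℝ} [IsFiniteMeasure μ] {h : ℝ → ℝ}

theorem isLpGradient_zero_of_bounded_of_hasCompactSupport {C : ℝ} (hh : Measurable h)
    (hC : ∀ x, |h x| ≤ C) (hsupp : HasCompactSupport h)
    (hM : h.support ⊆ nonintegrableSet (μ.rnDeriv volume)⁻¹ volume) : IsLpGradient 2 μ 0 h := by
  obtain ⟨R, hR, hRsupp⟩ := hsupp.isCompact.isBounded.subset_ball_lt 0 0
  have hsuppR : h.support ⊆ Ioc (-R) R := (subset_tsupport h).trans <| hRsupp.trans <| by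
    simpa [Real.ball_eq_Ioo] using Ioo_subset_Ioc_self
  have hμ : μ univ ^ (2 : ℝ≥0∞).toReal⁻¹ ≠ ⊤ :=
    ENNReal.rpow_ne_top_of_nonneg (by positivity) (measure_ne_top μ univ)
  refine isLpGradient_of_forall_exists one_le_two aestronglyMeasurable_const
    hh.aestronglyMeasurable (K := μ univ ^ (2 : ℝ≥0∞).toReal⁻¹ + 1) (by finiteness) fun ε hε => ?_
  obtain ⟨w, hw, hws, -, hprim, hwh⟩ :=
    hasSmallPrimitiveApprox hh hC hM (NNReal.coe_pos.2 hε) (neg_le_self hR.le) ε hε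
  rw [indicator_eq_self.2 hsuppR] at hwh
  refine ⟨fun x => ∫ t in Iic x, w t, w,
    (continuous_integral_Iic <|
      integrable_of_memLp_of_support_subset_Ioc hw hws).aestronglyMeasurable,
    hw.left_of_add_measure.1, isLpGradient_integral_Iic one_le_two ENNReal.ofNat_ne_top
      isCompact_Icc hw (hws.trans Ioc_subset_Icc_self), ?_⟩
  rw [sub_zero, add_mul, one_mul]
  refine add_le_add ((eLpNorm_le_of_ae_bound (.of_forall hprim)).trans_eq ?_) hwh
  rw [ENNReal.ofReal_coe_nnreal]

theorem isLpGradient_zero_of_ae_eq_zero (hh : MemLp h 2 μ)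
    (hM : ∀ᵐ x ∂μ, x ∉ nonintegrableSet (μ.rnDeriv volume)⁻¹ volume → h x = 0) :
    IsLpGradient 2 μ 0 h := by
  set N := nonintegrableSet (μ.rnDeriv volume)⁻¹ volume
  have hN : MeasurableSet N := (isClosed_nonintegrableSet _ _).measurableSet
  have hhN : N.indicator h =ᵐ[μ] h := by
    filter_upwards [hM] with x hx
    by_cases hxN : x ∈ N <;> simp [hxN, hx]
  refine isLpGradient_of_forall_exists one_le_two aestronglyMeasurable_const hh.1
    ENNReal.one_ne_top fun ε hε => ?_
  obtain ⟨g, hgc, hgε, hg, -⟩ := hh.exists_hasCompactSupport_eLpNorm_sub_le ENNReal.ofNat_ne_top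
    (ENNReal.coe_ne_zero.2 hε.ne')
  obtain ⟨C, hC⟩ := hgc.exists_bound_of_continuous hg
  have hgN : Measurable (N.indicator g) := hg.measurable.indicator hN
  refine ⟨0, N.indicator g, aestronglyMeasurable_const, hgN.aestronglyMeasurable,
    isLpGradient_zero_of_bounded_of_hasCompactSupport hgN
      (fun x => (norm_indicator_le_norm_self g x).trans (hC x))
      (hgc.mono (support_indicator.trans_subset inter_subset_right))
      support_indicator_subset, ?_⟩
  calc eLpNorm (0 - 0 : ℝ → ℝ) 2 μ + eLpNorm (N.indicator g - h) 2 μ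
      = eLpNorm (N.indicator (h - g)) 2 μ := by
        rw [sub_zero, eLpNorm_zero, zero_add, eLpNorm_sub_comm, indicator_sub']
        exact eLpNorm_congr_ae (hhN.symm.sub .rfl)
    _ ≤ eLpNorm (h - g) 2 μ := eLpNorm_indicator_le _
    _ ≤ 1 * ε := by rwa [one_mul]

theorem isLpGradient_of_ae_eq_deriv {u v : ℝ → ℝ} (hu : ContDiff ℝ 1 u)
    (hv : MemLp (v - deriv u) 2 μ)
    (hvu : ∀ᵐ x ∂μ, x ∉ nonintegrableSet (μ.rnDeriv volume)⁻¹ volume → v x = deriv u x) :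
    IsLpGradient 2 μ u v := by
  have hgrad : IsLpGradient 2 μ 0 (v - deriv u) := isLpGradient_zero_of_ae_eq_zero hv <| by
    filter_upwards [hvu] with x hx hxM
    exact sub_eq_zero.2 (hx hxM)
  simpa using hgrad.add_contDiff hu

end Truncation

theorem memLp_of_continuous_of_measure_compl_eq_zero {α E : Type*} [TopologicalSpace α]
    [MeasurableSpace α] [OpensMeasurableSpace α] [NormedAddCommGroup E]
    [SecondCountableTopologyEither α E] {μ : Measure α} [IsFiniteMeasure μ] {K : Set α}
    (hK : IsCompact K) (hμK : μ Kᶜ = 0) {g : α → E} (hg : Continuous g) (p : ℝ≥0∞) :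
    MemLp g p μ := by
  obtain ⟨C, hC⟩ := hK.exists_bound_of_continuousOn hg.continuousOn
  have hKae : ∀ᵐ x ∂μ, x ∈ K := hμK
  exact .of_bound hg.aestronglyMeasurable C (hKae.mono hC)

theorem countable_setOf_measure_singleton_pos {α : Type*} [MeasurableSpace α]
    [MeasurableSingletonClass α] (μ : Measure α) [SFinite μ] : {x | 0 < μ {x}}.Countable :=
  Measure.countable_meas_pos_of_disjoint_iUnion measurableSet_singleton
    fun _ _ hxy => disjoint_singleton.2 hxy

theorem truncated_derivative_is_gradient_general (μ : Measure ℝ) [IsFiniteMeasure μ]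
    {ρ : ℝ → ℝ≥0∞} (hρ : Measurable ρ) {μs : Measure ℝ} (hsing : μs ⟂ₘ volume)
    (hdecomp : μ = volume.withDensity ρ + μs) (I : Set ℝ) {A : Set ℝ} (hA : MeasurableSet A)
    {u : ℝ → ℝ} (hu : ContDiff ℝ 1 u) (hu' : MemLp (deriv u) 2 μ) :
    IsLpGradient 2 μ u
      (((nonintegrableSet ρ⁻¹ (volume.restrict I))ᶜ ∪ A).indicator (deriv u)) := by
  have hM := (isClosed_nonintegrableSet ρ⁻¹ (volume.restrict I)).measurableSet
  refine isLpGradient_of_ae_eq_deriv hu ((hu'.indicator (hM.compl.union hA)).sub hu') <|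
    .of_forall fun x hx => indicator_of_mem (.inl fun hxM => hx ?_) _
  exact nonintegrableSet_inv_subset_of_eq_withDensity_add hρ hsing hdecomp I hxM

/-- For any `C¹` function `u`, the function equal to `u'` outside `M` and at the atoms of
`μ`, and to `0` elsewhere on `M`, is a `μ`-gradient of `u`. -/
theorem truncated_derivative_is_gradient
    (a b : ℝ) (hab : a < b) (I : Set ℝ) (hI : I = Set.Ioo a b)
    (μ : Measure ℝ) [IsFiniteMeasure μ] (hμI : μ Iᶜ = 0)
    (f : ℝ → ℝ) (hfmeas : Measurable f) (hfnonneg : 0 ≤ f)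
    (μs : Measure ℝ) (hsing : μs ⟂ₘ volume)
    (hdecomp : μ = volume.withDensity (fun x => ENNReal.ofReal (f x)) + μs)
    (M : Set ℝ)
    (hM : M = {x ∈ closure I | ∀ ε > 0,
      ∫⁻ t in I ∩ Set.Ioo (x - ε) (x + ε), (ENNReal.ofReal (f t))⁻¹ = ⊤})
    (u : ℝ → ℝ) (hu : ContDiff ℝ 1 u)
    (v : ℝ → ℝ)
    (hv : ∀ x, v x = if x ∉ M ∨ 0 < μ {x} then deriv u x else 0) :
    ∃ U : ℕ → ℝ → ℝ, (∀ n, ContDiff ℝ 1 (U n)) ∧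
      Tendsto (fun n => eLpNorm (fun x => U n x - u x) 2 μ) atTop (nhds 0) ∧
      Tendsto (fun n => eLpNorm (fun x => deriv (U n) x - v x) 2 μ) atTop (nhds 0) := by
  rw [setOf_lintegral_inter_Ioo_eq_top] at hM
  have hv_eq : v = (Mᶜ ∪ {x | 0 < μ {x}}).indicator (deriv u) :=
    funext fun x => by simp [hv, indicator_apply]
  subst hI hM hv_eq
  exact truncated_derivative_is_gradient_general μ hfmeas.ennreal_ofReal hsing hdecomp _
    (countable_setOf_measure_singleton_pos μ).measurableSet hu <|
    memLp_of_continuous_of_measure_compl_eq_zero isCompact_Icc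
      (measure_mono_null (compl_subset_compl.2 Ioo_subset_Icc_self) hμI)
      (hu.continuous_deriv le_rfl) 2
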